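/- Let I, J ⊆ ℝ be intervals, E a Banach space, f : I → ℝ locally absolutely continuous with f(I) ⊆ J, and B : J → End(E) locally essentially bounded and Bochner measurable. If y : J' → E is a continuous function on a subinterval J' ⊆ J satisfying y(t) − y(s) = ∫_s^t B(λ) y(λ) dλ for all s, t ∈ J', then for any subinterval I' ⊆ f⁻¹(J'), the function x = y ∘ f restricted to I' satisfies x(t) − x(s) = ∫_s^t f'(λ) B(f(λ)) x(λ) dλ for all s, t ∈ I'. -/

import Mathlib

open MeasureTheory Set intervalIntegral

/-- `f` is absolutely continuous on the set `s`: for every `ε > 0` there is `δ > 0` such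
that for every finite family of non-overlapping subintervals of `s` of total length `< δ`,
the total variation of `f` over them is `< ε`. -/
def AbsolutelyContinuousOn (f : ℝ → ℝ) (s : Set ℝ) : Prop :=
  ∀ ε > (0 : ℝ), ∃ δ > (0 : ℝ), ∀ n : ℕ, ∀ u v : ℕ → ℝ,
    (∀ i < n, u i ∈ s ∧ v i ∈ s ∧ u i ≤ v i) →
    (∀ i < n, ∀ j < n, i ≠ j → Set.Ioo (u i) (v i) ∩ Set.Ioo (u j) (v j) = ∅) →
    (∑ i ∈ Finset.range n, (v i - u i)) < δ →
    (∑ i ∈ Finset.range n, |f (v i) - f (u i)|) < ε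

/-- `f` is locally absolutely continuous on the interval `I`: absolutely continuous on
every compact subinterval of `I`. -/
def LocallyAbsolutelyContinuousOn (f : ℝ → ℝ) (I : Set ℝ) : Prop :=
  ∀ a ∈ I, ∀ b ∈ I, AbsolutelyContinuousOn f (Set.Icc a b)

/-- `f'` is the derivative of `f` relative to `I`, in the convention of the paper:
it is the derivative at points of differentiability and `0` elsewhere. -/
def IsDerivWithinOf (f' f : ℝ → ℝ) (I : Set ℝ) : Prop :=
  ∀ t ∈ I, (DifferentiableWithinAt ℝ f I t → HasDerivWithinAt f (f' t) I t) ∧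
    (¬ DifferentiableWithinAt ℝ f I t → f' t = 0)

/-- `y ∈ L^∞_loc(J; E)`: `y` is Bochner measurable on `J` and essentially bounded on
every compact subinterval of `J`. -/
def LocEssBdd {E : Type*} [NormedAddCommGroup E] (y : ℝ → E) (J : Set ℝ) : Prop :=
  AEStronglyMeasurable y (volume.restrict J) ∧
  ∀ a ∈ J, ∀ b ∈ J, ∃ M : ℝ, ∀ᵐ t ∂(volume.restrict (Set.uIcc a b)), ‖y t‖ ≤ M

/-! Outside a null set `N` of points `u`, the primitive `y` has derivative `g u`, so the chain rule
gives `(y ∘ f)' = f' • (g ∘ f)` at almost every `τ` with `f τ ∉ N`. Where `f τ ∈ N`, the derivative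
of `f` vanishes almost everywhere, because a set mapped into a null set can only be non-null if the
derivative is zero on almost all of it; as `y` is locally Lipschitz, `(y ∘ f)'` vanishes there too.
Finally `y ∘ f` is absolutely continuous, hence the integral of its derivative. -/

open Filter Topology
open scoped NNReal

section NullSets

theorem addHaar_eq_zero_of_addHaar_image_eq_zero {V : Type*} [NormedAddCommGroup V]
    [NormedSpace ℝ V] [FiniteDimensional ℝ V] [MeasurableSpace V] [BorelSpace V]
    (μ : Measure V) [μ.IsAddHaarMeasure] {f : V → V} {f' : V → V →L[ℝ] V} {s : Set V}
    (hf' : ∀ x ∈ s, HasFDerivWithinAt f (f' x) s x) (hdet : ∀ x ∈ s, (f' x).det ≠ 0)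
    (himage : μ (f '' s) = 0) : μ s = 0 := by
  have exists_expansion (A : V →L[ℝ] V) : ∃ δ : ℝ≥0, δ ≠ 0 ∧ (A.det ≠ 0 →
      ∀ t : Set V, ApproximatesLinearOn f A t δ → μ (f '' t) = 0 → μ t = 0) := by
    by_cases hA : A.det = 0
    · exact ⟨1, one_ne_zero, fun h => absurd hA h⟩
    obtain ⟨m, hm0, hm⟩ := ENNReal.lt_iff_exists_nnreal_btwn.1
      (ENNReal.ofReal_pos.2 (abs_pos.2 hA))
    obtain ⟨δ, hδ, hδ0⟩ :=
      ((mul_le_addHaar_image_of_lt_det μ A hm).and self_mem_nhdsWithin).exists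
    refine ⟨δ, ne_of_gt hδ0, fun _ t ht himt => ?_⟩
    have hmul : m * μ t ≤ 0 := (hδ t f ht).trans_eq himt
    exact (mul_eq_zero.1 (nonpos_iff_eq_zero.1 hmul)).resolve_left hm0.ne'
  choose r hr0 hr using exists_expansion
  obtain ⟨t, A, -, -, hst, happrox, hA⟩ :=
    exists_partition_approximatesLinearOn_of_hasFDerivWithinAt f s f' hf' r hr0
  rcases s.eq_empty_or_nonempty with rfl | hs
  · exact measure_empty
  have hpiece (n : ℕ) : μ (s ∩ t n) = 0 := by
    obtain ⟨x, hx, hAx⟩ := hA hs n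
    exact hr (A n) (hAx ▸ hdet x hx) _ (happrox n)
      (measure_mono_null (image_mono inter_subset_left) himage)
  rw [← inter_eq_left.2 hst, inter_iUnion]
  exact measure_iUnion_null hpiece

theorem ae_deriv_eq_zero_or_comp {p : ℝ → Prop} (hp : ∀ᵐ u, p u) (f : ℝ → ℝ) :
    ∀ᵐ τ, deriv f τ = 0 ∨ p (f τ) := by
  refine ae_iff.2 (addHaar_eq_zero_of_addHaar_image_eq_zero volume
    (f' := fun τ => .toSpanSingleton ℝ (deriv f τ)) (f := f) ?_ ?_ ?_)
  · exact fun τ hτ =>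
      (differentiableAt_of_deriv_ne_zero (not_or.1 hτ).1).hasDerivAt.hasFDerivAt.hasFDerivWithinAt
  · intro τ hτ
    rw [ContinuousLinearMap.det_toSpanSingleton]
    exact (not_or.1 hτ).1
  · refine measure_mono_null (image_subset_iff.2 fun τ hτ => ?_) (ae_iff.1 hp)
    exact (not_or.1 hτ).2

theorem ae_mem_nhds_of_ordConnected {s : Set ℝ} (hs : s.OrdConnected) :
    ∀ᵐ x, x ∈ s → s ∈ 𝓝 x := by
  filter_upwards [measure_eq_zero_iff_ae_notMem.1 (hs.convex.addHaar_frontier volume)]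
    with x hx hxs
  by_contra hns
  exact hx ⟨subset_closure hxs, fun hxi => hns (mem_interior_iff_mem_nhds.1 hxi)⟩

end NullSets

section AbsoluteContinuity

theorem absolutelyContinuousOnInterval_of_dist_le_mul {X Y : Type*} [PseudoMetricSpace X]
    [PseudoMetricSpace Y] {f : ℝ → X} {x : ℝ → Y} {a b K : ℝ}
    (hf : AbsolutelyContinuousOnInterval f a b)
    (hx : ∀ s ∈ uIcc a b, ∀ t ∈ uIcc a b, dist (x s) (x t) ≤ K * dist (f s) (f t)) :
    AbsolutelyContinuousOnInterval x a b := by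
  have hlim := Tendsto.const_mul K hf
  rw [mul_zero] at hlim
  refine squeeze_zero' (Eventually.of_forall fun P => Finset.sum_nonneg fun _ _ => dist_nonneg) ?_
    hlim
  refine eventually_inf_principal.2 (Eventually.of_forall fun P hP => ?_)
  rw [Finset.mul_sum]
  exact Finset.sum_le_sum fun i hi => hx _ (hP.1 i hi).1 _ (hP.1 i hi).2

variable {E : Type*} [NormedAddCommGroup E] [NormedSpace ℝ E]

theorem absolutelyContinuousOnInterval_intervalIntegral {h : ℝ → E} {a b : ℝ}
    (hh : IntervalIntegrable h volume a b) :
    AbsolutelyContinuousOnInterval (fun t => ∫ u in a..t, h u) a b := by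
  refine absolutelyContinuousOnInterval_of_dist_le_mul (K := 1)
    (hh.norm.absolutelyContinuousOnInterval_intervalIntegral left_mem_uIcc) fun s hs t ht => ?_
  have has : IntervalIntegrable h volume a s := hh.mono_set (uIcc_subset_uIcc_left hs)
  have hat : IntervalIntegrable h volume a t := hh.mono_set (uIcc_subset_uIcc_left ht)
  rw [dist_eq_norm, Real.dist_eq, one_mul, integral_interval_sub_left has hat,
    integral_interval_sub_left has.norm hat.norm]
  exact norm_integral_le_abs_integral_norm

theorem integral_eq_sub_of_absolutelyContinuousOnInterval [CompleteSpace E] {x h : ℝ → E} {a b : ℝ}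
    (hx : AbsolutelyContinuousOnInterval x a b) (hh : IntervalIntegrable h volume a b)
    (hderiv : ∀ᵐ τ, τ ∈ uIcc a b → HasDerivAt x (h τ) τ) :
    ∫ τ in a..b, h τ = x b - x a := by
  have hdiff : ∀ᵐ τ, τ ∈ uIcc a b → HasDerivAt (x - fun t => ∫ u in a..t, h u) 0 τ := by
    filter_upwards [hderiv, hh.ae_hasDerivAt_integral] with τ hxτ hhτ hτ
    simpa only [sub_self] using (hxτ hτ).sub (hhτ hτ a left_mem_uIcc)
  obtain ⟨C, hC⟩ := (hx.sub
    (absolutelyContinuousOnInterval_intervalIntegral hh)).const_of_ae_hasDerivAt_zero hdiff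
  have hab := (hC b right_mem_uIcc).trans (hC a left_mem_uIcc).symm
  simp only [Pi.sub_apply, integral_same, sub_zero] at hab
  rw [← hab, sub_sub_cancel]

end AbsoluteContinuity

section ChainRule

variable {E : Type*} [NormedAddCommGroup E] [NormedSpace ℝ E] {f : ℝ → ℝ} {y g : ℝ → E}

theorem hasDerivAt_comp_zero_of_lipschitzOnWith {K : ℝ≥0} {s : Set ℝ} {τ : ℝ}
    (hy : LipschitzOnWith K y s) (hf : HasDerivAt f 0 τ) (hfs : ∀ᶠ σ in 𝓝 τ, f σ ∈ s) :
    HasDerivAt (y ∘ f) 0 τ := by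
  rw [hasDerivAt_iff_isLittleO] at hf ⊢
  simp only [smul_zero, sub_zero] at hf ⊢
  refine (Asymptotics.IsBigO.of_bound K ?_).trans_isLittleO hf
  filter_upwards [hfs] with σ hσ
  exact hy.norm_sub_le hσ hfs.self_of_nhds

theorem ae_hasDerivAt_comp_of_lipschitzOnWith {K : ℝ≥0} {s t : Set ℝ}
    (hy : LipschitzOnWith K y s) (hyg : ∀ᵐ u, u ∈ s → HasDerivAt y (g u) u) (ht : t.OrdConnected)
    (hfst : MapsTo f t s) (hf : ∀ᵐ τ, τ ∈ t → DifferentiableAt ℝ f τ) :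
    ∀ᵐ τ, τ ∈ t → HasDerivAt (y ∘ f) (deriv f τ • g (f τ)) τ := by
  filter_upwards [ae_deriv_eq_zero_or_comp hyg f, ae_mem_nhds_of_ordConnected ht, hf]
    with τ hgood htτ hfτ hτ
  have hderiv := (hfτ hτ).hasDerivAt
  rcases hgood with hzero | hgood
  · rw [hzero] at hderiv ⊢
    rw [zero_smul]
    exact hasDerivAt_comp_zero_of_lipschitzOnWith hy hderiv (eventually_of_mem (htτ hτ) hfst)
  · exact (hgood (hfst hτ)).scomp τ hderiv

end ChainRule

/-- `y` is a primitive of `g` on `s` in the integral sense. A vector solution `y` for `B` is a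
primitive of `fun u => B u (y u)`. As the integral of a non-integrable function is `0`, this says
something about `g` only where `g` is integrable. -/
def IsPrimitiveOn {E : Type*} [NormedAddCommGroup E] [NormedSpace ℝ E] (y g : ℝ → E)
    (s : Set ℝ) : Prop :=
  ∀ a ∈ s, ∀ b ∈ s, y b - y a = ∫ u in a..b, g u

namespace IsPrimitiveOn

variable {E : Type*} [NormedAddCommGroup E] [NormedSpace ℝ E] {y g : ℝ → E}

theorem mono {s t : Set ℝ} (hy : IsPrimitiveOn y g t) (hst : s ⊆ t) : IsPrimitiveOn y g s :=
  fun a ha b hb => hy a (hst ha) b (hst hb)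

theorem lipschitzOnWith {s : Set ℝ} {K : ℝ≥0} (hy : IsPrimitiveOn y g s) (hs : s.OrdConnected)
    (hgK : ∀ᵐ u, u ∈ s → ‖g u‖ ≤ K) : LipschitzOnWith K y s := by
  refine LipschitzOnWith.of_dist_le_mul fun t ht r hr => ?_
  rw [dist_eq_norm, Real.dist_eq, hy r hr t ht]
  refine norm_integral_le_of_norm_le_const_ae ?_
  filter_upwards [hgK] with u hu hurt
  exact hu (hs.uIcc_subset hr ht (uIoc_subset_uIcc hurt))

variable [CompleteSpace E] {c d : ℝ}

theorem ae_hasDerivAt (hy : IsPrimitiveOn y g (uIcc c d)) (hg : IntervalIntegrable g volume c d) :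
    ∀ᵐ u, u ∈ uIcc c d → HasDerivAt y (g u) u := by
  filter_upwards [hg.ae_hasDerivAt_integral, ae_mem_nhds_of_ordConnected ordConnected_uIcc]
    with u hint hnhds hu
  refine ((hint hu c left_mem_uIcc).const_add (y c)).congr_of_eventuallyEq ?_
  filter_upwards [hnhds hu] with v hv
  exact eq_add_of_sub_eq' (hy c left_mem_uIcc v hv)

theorem sub_comp_eq_integral_deriv_smul {f : ℝ → ℝ} {a b : ℝ} {K : ℝ≥0}
    (hy : IsPrimitiveOn y g (uIcc c d)) (hg : IntervalIntegrable g volume c d)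
    (hgK : ∀ᵐ u, u ∈ uIcc c d → ‖g u‖ ≤ K) (hf : AbsolutelyContinuousOnInterval f a b)
    (hfcd : MapsTo f (uIcc a b) (uIcc c d)) :
    y (f b) - y (f a) = ∫ τ in a..b, deriv f τ • g (f τ) := by
  have hlip : LipschitzOnWith K y (uIcc c d) := hy.lipschitzOnWith ordConnected_uIcc hgK
  have hac : AbsolutelyContinuousOnInterval (y ∘ f) a b :=
    absolutelyContinuousOnInterval_of_dist_le_mul hf fun s hs t ht =>
      hlip.dist_le_mul _ (hfcd hs) _ (hfcd ht)
  have hchain : ∀ᵐ τ, τ ∈ uIcc a b → HasDerivAt (y ∘ f) (deriv f τ • g (f τ)) τ :=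
    ae_hasDerivAt_comp_of_lipschitzOnWith hlip (hy.ae_hasDerivAt hg) ordConnected_uIcc hfcd
      hf.ae_differentiableAt
  have hmem : ∀ᵐ τ ∂volume.restrict (uIoc a b), τ ∈ uIcc a b :=
    (ae_restrict_mem measurableSet_uIoc).mono fun _ hτ => uIoc_subset_uIcc hτ
  have hmeas : AEStronglyMeasurable (fun τ => deriv f τ • g (f τ))
      (volume.restrict (uIoc a b)) := by
    refine (stronglyMeasurable_deriv (y ∘ f)).aestronglyMeasurable.congr ?_
    filter_upwards [hmem, ae_restrict_of_ae hchain] with τ hτ hchainτ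
    exact (hchainτ hτ).deriv
  have hbound : ∀ᵐ τ ∂volume.restrict (uIoc a b),
      ‖deriv f τ • g (f τ)‖ ≤ K * ‖deriv f τ‖ := by
    filter_upwards [hmem, ae_restrict_of_ae (ae_deriv_eq_zero_or_comp hgK f)] with τ hτ hgood
    rw [norm_smul, mul_comm]
    rcases hgood with hzero | hgood
    · simp only [hzero, norm_zero, mul_zero, le_refl]
    · exact mul_le_mul_of_nonneg_right (hgood (hfcd hτ)) (norm_nonneg _)
  have hint : IntervalIntegrable (fun τ => deriv f τ • g (f τ)) volume a b :=
    intervalIntegrable_iff.2 <|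
      ((intervalIntegrable_iff.1 hf.intervalIntegrable_deriv).norm.const_mul K).mono' hmeas hbound
  exact (integral_eq_sub_of_absolutelyContinuousOnInterval hac hint hchain).symm

end IsPrimitiveOn

theorem exists_mapsTo_uIcc_of_continuousOn {α β : Type*} [ConditionallyCompleteLinearOrder α]
    [TopologicalSpace α] [OrderTopology α] [LinearOrder β] [TopologicalSpace β]
    [OrderClosedTopology β] {f : α → β} {a b : α} {s : Set β} (hf : ContinuousOn f (uIcc a b))
    (hfs : MapsTo f (uIcc a b) s) :
    ∃ c ∈ s, ∃ d ∈ s, MapsTo f (uIcc a b) (uIcc c d) := by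
  obtain ⟨p, hp, hmin⟩ := isCompact_uIcc.exists_isMinOn nonempty_uIcc hf
  obtain ⟨q, hq, hmax⟩ := isCompact_uIcc.exists_isMaxOn nonempty_uIcc hf
  exact ⟨f p, hfs hp, f q, hfs hq, fun τ hτ => Icc_subset_uIcc ⟨hmin hτ, hmax hτ⟩⟩

theorem AbsolutelyContinuousOn.absolutelyContinuousOnInterval {f : ℝ → ℝ} {a b : ℝ}
    (hf : AbsolutelyContinuousOn f (uIcc a b)) : AbsolutelyContinuousOnInterval f a b := by
  rw [absolutelyContinuousOnInterval_iff]
  intro ε hε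
  obtain ⟨δ, hδ, hfδ⟩ := hf ε hε
  refine ⟨δ, hδ, ?_⟩
  rintro ⟨n, P⟩ ⟨hmem, hdisj⟩ hlen
  have hdist (i : ℕ) : max (P i).1 (P i).2 - min (P i).1 (P i).2 = dist (P i).1 (P i).2 := by
    rw [Real.dist_eq, max_sub_min_eq_abs']
  have hdist_image (i : ℕ) :
      |f (max (P i).1 (P i).2) - f (min (P i).1 (P i).2)| = dist (f (P i).1) (f (P i).2) := by
    rcases le_total (P i).1 (P i).2 with h | h
    · rw [max_eq_right h, min_eq_left h, Real.dist_eq, abs_sub_comm]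
    · rw [max_eq_left h, min_eq_right h, Real.dist_eq]
  have hsum := hfδ n (fun i => min (P i).1 (P i).2) (fun i => max (P i).1 (P i).2) ?_ ?_ ?_
  · simpa only [hdist_image] using hsum
  · intro i hi
    obtain ⟨hfst, hsnd⟩ := hmem i (Finset.mem_range.2 hi)
    have hsub := uIcc_subset_uIcc hfst hsnd
    exact ⟨hsub ⟨le_rfl, min_le_max⟩, hsub ⟨min_le_max, le_rfl⟩, min_le_max⟩
  · intro i hi j hj hij
    have hij_disj := hdisj (Finset.mem_coe.2 (Finset.mem_range.2 hi))
      (Finset.mem_coe.2 (Finset.mem_range.2 hj)) hij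
    exact disjoint_iff_inter_eq_empty.1 (hij_disj.mono Ioo_subset_Ioc_self Ioo_subset_Ioc_self)
  · simpa only [hdist] using hlen

theorem LocallyAbsolutelyContinuousOn.absolutelyContinuousOnInterval {f : ℝ → ℝ} {I : Set ℝ}
    {a b : ℝ} (hf : LocallyAbsolutelyContinuousOn f I) (ha : a ∈ I) (hb : b ∈ I) :
    AbsolutelyContinuousOnInterval f a b :=
  (hf _ (min_rec' (· ∈ I) ha hb) _ (max_rec' (· ∈ I) ha hb)).absolutelyContinuousOnInterval

theorem IsDerivWithinOf.eq_deriv {f f' : ℝ → ℝ} {I : Set ℝ} {t : ℝ}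
    (hf' : IsDerivWithinOf f' f I) (hI : I ∈ 𝓝 t) : f' t = deriv f t := by
  have hft := hf' t (mem_of_mem_nhds hI)
  by_cases hdiff : DifferentiableAt ℝ f t
  · exact ((hft.1 hdiff.differentiableWithinAt).hasDerivAt hI).deriv.symm
  · rw [deriv_zero_of_not_differentiableAt hdiff]
    exact hft.2 fun hwithin => hdiff (hwithin.differentiableAt hI)

namespace LocEssBdd

variable {E : Type*} [NormedAddCommGroup E] {g : ℝ → E} {J : Set ℝ} {c d : ℝ}

theorem exists_nnreal_bound (hg : LocEssBdd g J) (hc : c ∈ J) (hd : d ∈ J) :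
    ∃ K : ℝ≥0, ∀ᵐ u, u ∈ uIcc c d → ‖g u‖ ≤ K := by
  obtain ⟨M, hM⟩ := hg.2 c hc d hd
  refine ⟨M.toNNReal, (ae_restrict_iff' measurableSet_uIcc).1 ?_⟩
  exact hM.mono fun u hu => hu.trans (Real.le_coe_toNNReal M)

theorem intervalIntegrable (hg : LocEssBdd g J) (hJ : J.OrdConnected) (hc : c ∈ J)
    (hd : d ∈ J) : IntervalIntegrable g volume c d := by
  have hsub : uIcc c d ⊆ J := hJ.uIcc_subset hc hd
  obtain ⟨M, hM⟩ := hg.2 c hc d hd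
  rw [intervalIntegrable_iff']
  exact .of_bound isCompact_uIcc.measure_lt_top
    (hg.1.mono_measure (Measure.restrict_mono_set volume hsub)) M hM

theorem clm_apply {𝕜 F : Type*} [NontriviallyNormedField 𝕜] [NormedSpace 𝕜 E]
    [NormedAddCommGroup F] [NormedSpace 𝕜 F] {B : ℝ → E →L[𝕜] F} {y : ℝ → E} {J' : Set ℝ}
    (hB : LocEssBdd B J) (hJ' : J'.OrdConnected) (hJ'J : J' ⊆ J)
    (hy : ContinuousOn y J') : LocEssBdd (fun u => B u (y u)) J' := by
  constructor
  · exact (ContinuousLinearMap.id 𝕜 (E →L[𝕜] F)).aestronglyMeasurable_comp₂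
      (hB.1.mono_measure (Measure.restrict_mono_set volume hJ'J))
      (hy.aestronglyMeasurable hJ'.measurableSet)
  · intro c hc d hd
    obtain ⟨M, hM⟩ := hB.2 c (hJ'J hc) d (hJ'J hd)
    obtain ⟨C, hC⟩ :=
      isCompact_uIcc.exists_bound_of_continuousOn (hy.mono (hJ'.uIcc_subset hc hd))
    refine ⟨M * C, ?_⟩
    filter_upwards [hM, ae_restrict_mem measurableSet_uIcc] with u hu hmem
    exact (B u).le_of_opNorm_le_of_le hu (hC u hmem)

end LocEssBdd

theorem stmt3_general {E : Type*} [NormedAddCommGroup E] [NormedSpace ℝ E] [CompleteSpace E]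
    {I I' J : Set ℝ} {f f' : ℝ → ℝ} {y g : ℝ → E} (hf : LocallyAbsolutelyContinuousOn f I)
    (hf' : IsDerivWithinOf f' f I) (hI' : I'.OrdConnected) (hI'I : I' ⊆ I)
    (hJ : J.OrdConnected) (hfJ : MapsTo f I' J) (hg : LocEssBdd g J)
    (hy : IsPrimitiveOn y g J) :
    IsPrimitiveOn (y ∘ f) (fun τ => f' τ • g (f τ)) I' := by
  intro s hs t ht
  have hst : uIcc s t ⊆ I' := hI'.uIcc_subset hs ht
  have hac := hf.absolutelyContinuousOnInterval (hI'I hs) (hI'I ht)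
  obtain ⟨c, hc, d, hd, hcd⟩ :=
    exists_mapsTo_uIcc_of_continuousOn hac.continuousOn (hfJ.mono_left hst)
  obtain ⟨K, hK⟩ := hg.exists_nnreal_bound hc hd
  calc y (f t) - y (f s) = ∫ τ in s..t, deriv f τ • g (f τ) :=
        (hy.mono (hJ.uIcc_subset hc hd)).sub_comp_eq_integral_deriv_smul
          (hg.intervalIntegrable hJ hc hd) hK hac hcd
    _ = ∫ τ in s..t, f' τ • g (f τ) := integral_congr_uIoo fun τ hτ => by
        have hI : I ∈ 𝓝 τ := mem_of_superset (Icc_mem_nhds hτ.1 hτ.2) (hst.trans hI'I)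
        rw [hf'.eq_deriv hI]

/-- Substitution in vector solutions: if `y` is a vector solution for
`B ∈ L^∞_loc(J; End(E))` on a subinterval `J' ⊆ J` and `f ∈ AC_loc(I)`, `f(I) ⊆ J`,
then `x = y ∘ f` solves the equation for `A = f'·(B ∘ f)` on any subinterval
`I' ⊆ f⁻¹(J')`. -/
theorem stmt3 {E : Type*} [NormedAddCommGroup E] [NormedSpace ℝ E] [CompleteSpace E]
    (I J : Set ℝ) (hI : I.OrdConnected) (hJ : J.OrdConnected)
    (f f' : ℝ → ℝ) (hf : LocallyAbsolutelyContinuousOn f I)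
    (hf' : IsDerivWithinOf f' f I) (hfIJ : f '' I ⊆ J)
    (B : ℝ → E →L[ℝ] E) (hB : LocEssBdd B J)
    (J' : Set ℝ) (hJ'c : J'.OrdConnected) (hJ'J : J' ⊆ J)
    (y : ℝ → E) (hy : ContinuousOn y J')
    (hsol : ∀ s ∈ J', ∀ t ∈ J', y t - y s = ∫ u in s..t, B u (y u))
    (I' : Set ℝ) (hI'c : I'.OrdConnected) (hI'I : I' ⊆ I) (hI'f : ∀ t ∈ I', f t ∈ J') :
    ∀ s ∈ I', ∀ t ∈ I', y (f t) - y (f s) = ∫ τ in s..t, f' τ • B (f τ) (y (f τ)) :=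
  stmt3_general hf hf' hI'c hI'I hJ'c hI'f (hB.clm_apply hJ'c hJ'J hy) hsol
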